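/- arXiv:1909.09840 — 2 statements merged into one kernel-verified Lean document; each statement's English description precedes it below -/
import Mathlib

section
/- Define ω(h) = I₂(h)/I₀(h) for h ∈ (−1/4, 0) (the denominator is positive there). Then ω satisfies the Riccati equation h·(4h+1)·ω'(h) = (5/4)·ω(h)² + (2h−1)·ω(h) − h on (−1/4, 0); ω(h) → 1 as h → −1/4 from the right and ω(h) → 4/5 as h → 0 from the left, the latter because 2∫₀^{√2} √(x² − x⁴/2) dx = 4/3 and 2∫₀^{√2} x²·√(x² − x⁴/2) dx = 16/15; moreover ω'(h) < 0 and ω''(h) < 0 for every h ∈ (−1/4, 0), i.e. ω is strictly decreasing and strictly concave. -/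
/-! The proof reduces everything to a Riccati equation and a barrier argument.

Put `s = √(1 + 4h)`. Then `2h + x² - x⁴/2 = (s² - (x² - 1)²) / 2`, so the substitution
`x² = w := 1 + s cos θ` turns `I₀` and `I₂` into `s²/√2` times
`A = ∫₀^π sin²θ · w^(-1/2) dθ` and `B = ∫₀^π sin²θ · w^(1/2) dθ`; hence `ω = B / A`.
The integrals `∫₀^π sin²θ · w^p dθ` (`trigInt`) can be differentiated under the integral sign, and
integrating the exact differential of `sin³θ · w^(-1/2)` gives
`(1 - s²) J = 5B - 4A` with `J = ∫₀^π sin²θ · w^(-3/2) dθ` (`trigInt_recurrence`). Together these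
give the Riccati equation (`omega_hasDerivAt`), and `J > 0` gives `ω > 4/5`.

The limits follow by squeezing: `1 - s ≤ w ≤ 1 + s` gives `1 - s ≤ ω ≤ 1 + s`, and the bound
`(1 - s²) J = O(√(1 - s))` gives `4/5 < ω ≤ 4/5 + O(√(1 - s))`.

For the signs of `ω'` and `ω''`, the barrier principle `neg_of_barrier` is applied twice. Let `P` be
the right-hand side of the Riccati equation. Then `-P` tends to `0` at `-1/4`, and the
inequality `ω > 4/5` makes its derivative negative wherever `-P ≥ 0`; so `P > 0`, that is, `ω' < 0`.
Likewise `G = -h (4h+1)² ω''` is a polynomial in `h`, `ω` and `P / h`, tends to `0` at `-1/4`, and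
satisfies
`G' = (4h+1) ω' (4 - (5/2) ω') + G (8 + 8h - 10ω) / (-4h (4h+1))`, which is negative wherever
`G ≥ 0`; so `G < 0`, that is, `ω'' < 0`.
-/

open Set

/-- Lower endpoint of the oval projection: `x₋(h) = √(1 − √(1+4h))`. -/
noncomputable def xminus (h : ℝ) : ℝ := Real.sqrt (1 - Real.sqrt (1 + 4*h))

/-- Upper endpoint of the oval projection: `x₊(h) = √(1 + √(1+4h))`. -/
noncomputable def xplus (h : ℝ) : ℝ := Real.sqrt (1 + Real.sqrt (1 + 4*h))

/-- The Abelian integral `I_k(h) = 2∫_{x₋(h)}^{x₊(h)} x^k √(2h + x² − x⁴/2) dx`. -/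
noncomputable def AbI (k : ℕ) (h : ℝ) : ℝ :=
  2 * ∫ x in (xminus h)..(xplus h), x ^ k * Real.sqrt (2*h + x^2 - x^4/2)
/-- The ratio `ω = I₂/I₀`. -/
noncomputable def omegaRatio (h : ℝ) : ℝ := AbI 2 h / AbI 0 h

open Filter Topology MeasureTheory

/-! ### Reduction to integrals over a fixed interval -/

/-- The integral `trigInt p s = ∫₀^π sin²θ · (1 + s cos θ)^p dθ`, with real exponent `p`. After the
substitution `x² = 1 + s cos θ`, the integrals `I₀` and `I₂` become multiples of
`trigInt (-1/2) s` and `trigInt (1/2) s`. -/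
noncomputable def trigInt (p s : ℝ) : ℝ :=
  ∫ θ in (0:ℝ)..Real.pi, Real.sin θ ^ 2 * (1 + s * Real.cos θ) ^ p

lemma one_sub_le_w {s : ℝ} (hs : s ∈ Ioo (0:ℝ) 1) (θ : ℝ) : 1 - s ≤ 1 + s * Real.cos θ := by
  nlinarith [Real.neg_one_le_cos θ, hs.1]

lemma w_le_one_add {s : ℝ} (hs : s ∈ Ioo (0:ℝ) 1) (θ : ℝ) : 1 + s * Real.cos θ ≤ 1 + s := by
  nlinarith [Real.cos_le_one θ, hs.1]

lemma w_pos {s : ℝ} (hs : s ∈ Ioo (0:ℝ) 1) (θ : ℝ) : 0 < 1 + s * Real.cos θ := by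
  linarith [one_sub_le_w hs θ, hs.2]

lemma continuous_w_rpow (p : ℝ) {s : ℝ} (hs : s ∈ Ioo (0:ℝ) 1) :
    Continuous fun θ : ℝ => (1 + s * Real.cos θ) ^ p :=
  Continuous.rpow_const (by fun_prop) fun θ => Or.inl (w_pos hs θ).ne'

lemma continuous_integrand (p : ℝ) {s : ℝ} (hs : s ∈ Ioo (0:ℝ) 1) :
    Continuous fun θ : ℝ => Real.sin θ ^ 2 * (1 + s * Real.cos θ) ^ p :=
  (by fun_prop : Continuous fun θ : ℝ => Real.sin θ ^ 2).mul (continuous_w_rpow p hs)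

lemma trigInt_pos (p : ℝ) {s : ℝ} (hs : s ∈ Ioo (0:ℝ) 1) : 0 < trigInt p s := by
  refine intervalIntegral.intervalIntegral_pos_of_pos_on
    ((continuous_integrand p hs).intervalIntegrable _ _) (fun θ hθ => ?_) Real.pi_pos
  have h1 := Real.sin_pos_of_mem_Ioo hθ
  have h2 := Real.rpow_pos_of_pos (w_pos hs θ) p
  positivity

/-- Since `w^p = (1 + s cos θ) w^(p-1)` for `w = 1 + s cos θ`, differences of consecutive
`trigInt` carry the weight `cos θ`. -/
lemma mul_integral_cos (p : ℝ) {s : ℝ} (hs : s ∈ Ioo (0:ℝ) 1) :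
    s * ∫ θ in (0:ℝ)..Real.pi,
      Real.sin θ ^ 2 * (Real.cos θ * (1 + s * Real.cos θ) ^ (p - 1)) =
    trigInt p s - trigInt (p - 1) s := by
  unfold trigInt
  rw [← intervalIntegral.integral_sub ((continuous_integrand p hs).intervalIntegrable _ _)
    ((continuous_integrand (p-1) hs).intervalIntegrable _ _),
    ← intervalIntegral.integral_const_mul]
  congr 1
  ext θ
  have : (1 + s * Real.cos θ) ^ p = (1 + s * Real.cos θ) ^ (p - 1) * (1 + s * Real.cos θ) := by
    rw [← Real.rpow_add_one (w_pos hs θ).ne']; congr 1; ring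
  rw [this]; ring

lemma hasDerivAt_trigInt (p : ℝ) {s : ℝ} (hs : s ∈ Ioo (0:ℝ) 1) :
    HasDerivAt (trigInt p) (p * (trigInt p s - trigInt (p - 1) s) / s) s := by
  have hs0 : s ≠ 0 := hs.1.ne'
  -- A compact neighbourhood of `s` on which the derivative of the integrand is bounded.
  obtain ⟨a, ha0, has⟩ := exists_between hs.1
  obtain ⟨b, hsb, hb1⟩ := exists_between hs.2
  have hsub : Icc a b ⊆ Ioo (0:ℝ) 1 := fun x hx => ⟨by linarith [hx.1], by linarith [hx.2]⟩
  have hcont : ContinuousOn (fun z : ℝ × ℝ => Real.sin z.2 ^ 2 *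
      (p * (1 + z.1 * Real.cos z.2) ^ (p - 1) * Real.cos z.2))
      (Icc a b ×ˢ Icc (0:ℝ) Real.pi) := by
    refine ContinuousOn.mul (by fun_prop) (ContinuousOn.mul (ContinuousOn.mul
      continuousOn_const (ContinuousOn.rpow_const (by fun_prop) ?_)) (by fun_prop))
    rintro ⟨x, θ⟩ hz
    exact Or.inl (w_pos (hsub hz.1) θ).ne'
  obtain ⟨C, hC⟩ := (isCompact_Icc.prod isCompact_Icc).exists_bound_of_continuousOn hcont
  have hmem : Icc a b ∈ 𝓝 s := Icc_mem_nhds has hsb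
  have key := (intervalIntegral.hasDerivAt_integral_of_dominated_loc_of_deriv_le
    (μ := volume) (a := 0) (b := Real.pi) (bound := fun _ => C)
    (F := fun s θ => Real.sin θ ^ 2 * (1 + s * Real.cos θ) ^ p)
    (F' := fun s θ => Real.sin θ ^ 2 * (p * (1 + s * Real.cos θ) ^ (p - 1) * Real.cos θ))
    hmem ?_ ((continuous_integrand p hs).intervalIntegrable _ _) ?_ ?_
    (intervalIntegrable_const) ?_).2
  · convert! key using 1
    have h2 : (∫ θ in (0:ℝ)..Real.pi, Real.sin θ ^ 2 *
        (p * (1 + s * Real.cos θ) ^ (p - 1) * Real.cos θ)) =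
        p * ∫ θ in (0:ℝ)..Real.pi,
          Real.sin θ ^ 2 * (Real.cos θ * (1 + s * Real.cos θ) ^ (p - 1)) := by
      rw [← intervalIntegral.integral_const_mul]
      congr 1; ext θ; ring
    rw [h2, ← mul_integral_cos p hs]
    field_simp
  · filter_upwards [hmem] with x hx
    exact (continuous_integrand p (hsub hx)).aestronglyMeasurable
  · have h3 := continuous_w_rpow (p - 1) hs
    exact Continuous.aestronglyMeasurable (by fun_prop)
  · refine Eventually.of_forall fun θ hθ x hx => hC (x, θ) ⟨hx, ?_⟩
    rw [uIoc_of_le Real.pi_pos.le] at hθ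
    exact Ioc_subset_Icc_self hθ
  · refine Eventually.of_forall fun θ _ x hx => ?_
    have h1 : HasDerivAt (fun x : ℝ => 1 + x * Real.cos θ) (Real.cos θ) x := by
      simpa using ((hasDerivAt_id x).mul_const (Real.cos θ)).const_add 1
    have h2 := (h1.rpow_const (p := p) (Or.inl (w_pos (hsub hx) θ).ne')).const_mul
      (Real.sin θ ^ 2)
    convert! h2 using 1
    ring

/-- Integrating the exact differential of `sin³θ · w^(-1/2)` over `[0, π]` closes the system
satisfied by `trigInt (-1/2)` and `trigInt (1/2)`. -/
lemma trigInt_recurrence {s : ℝ} (hs : s ∈ Ioo (0:ℝ) 1) :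
    (1 - s ^ 2) * trigInt (-3/2) s = 5 * trigInt (1/2) s - 4 * trigInt (-1/2) s := by
  have hs0 : s ≠ 0 := hs.1.ne'
  have hd : ∀ θ ∈ uIcc (0:ℝ) Real.pi, HasDerivAt
      (fun θ => 2 * s * Real.sin θ ^ 3 * (1 + s * Real.cos θ) ^ (-1/2:ℝ))
      (5 * (Real.sin θ ^ 2 * (1 + s * Real.cos θ) ^ (1/2:ℝ))
        - 4 * (Real.sin θ ^ 2 * (1 + s * Real.cos θ) ^ (-1/2:ℝ))
        - (1 - s ^ 2) * (Real.sin θ ^ 2 * (1 + s * Real.cos θ) ^ (-3/2:ℝ))) θ := by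
    intro θ _
    have hw := (w_pos hs θ).ne'
    have h1 : HasDerivAt (fun θ : ℝ => 1 + s * Real.cos θ) (s * -Real.sin θ) θ :=
      ((Real.hasDerivAt_cos θ).const_mul s).const_add 1
    have h2 := (((Real.hasDerivAt_sin θ).pow 3).const_mul (2 * s)).mul
      (h1.rpow_const (p := (-1/2:ℝ)) (Or.inl hw))
    convert! h2 using 1
    have e1 : (1 + s * Real.cos θ) ^ (-1/2:ℝ) =
        (1 + s * Real.cos θ) ^ (-3/2:ℝ) * (1 + s * Real.cos θ) := by
      rw [← Real.rpow_add_one hw]; norm_num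
    have e2 : (1 + s * Real.cos θ) ^ (1/2:ℝ) =
        (1 + s * Real.cos θ) ^ (-3/2:ℝ) * (1 + s * Real.cos θ) * (1 + s * Real.cos θ) := by
      rw [← Real.rpow_add_one hw, ← Real.rpow_add_one hw]; norm_num
    have e3 : (-1/2 - 1 : ℝ) = -3/2 := by norm_num
    simp only [Pi.pow_apply]
    rw [e3, e2, e1]
    generalize (1 + s * Real.cos θ) ^ (-3/2:ℝ) = W
    have hsin : Real.cos θ ^ 2 = 1 - Real.sin θ ^ 2 := Real.cos_sq' θ
    push_cast
    linear_combination (-s ^ 2 * W * Real.sin θ ^ 2) * hsin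
  have hc := fun p => continuous_integrand p hs
  have hi := fun p => (hc p).intervalIntegrable (μ := volume) 0 Real.pi
  have key := intervalIntegral.integral_eq_sub_of_hasDerivAt hd
    ((((hi _).const_mul 5).sub ((hi _).const_mul 4)).sub ((hi _).const_mul (1 - s ^ 2)))
  rw [intervalIntegral.integral_sub (((hi _).const_mul 5).sub ((hi _).const_mul 4))
    ((hi _).const_mul (1 - s ^ 2)), intervalIntegral.integral_sub ((hi _).const_mul 5)
    ((hi _).const_mul 4)] at key
  simp only [intervalIntegral.integral_const_mul] at key
  simp only [Real.sin_pi, Real.sin_zero] at key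
  unfold trigInt
  linarith

lemma sqrt_mem {h : ℝ} (hh : h ∈ Ioo (-(1:ℝ)/4) 0) : Real.sqrt (1 + 4 * h) ∈ Ioo (0:ℝ) 1 := by
  refine ⟨Real.sqrt_pos.2 (by linarith [hh.1]), ?_⟩
  rw [Real.sqrt_lt' one_pos]; linarith [hh.2]

/-- The substitution `x = √(1 + s cos θ)`, `s = √(1 + 4h)`, straightens the oval. -/
lemma AbI_eq (k : ℕ) {h : ℝ} (hh : h ∈ Ioo (-(1:ℝ)/4) 0) :
    AbI k h = (1 + 4 * h) / Real.sqrt 2 *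
      trigInt ((k - 1) / 2) (Real.sqrt (1 + 4 * h)) := by
  have hs := sqrt_mem hh
  have hsq : Real.sqrt (1 + 4 * h) ^ 2 = 1 + 4 * h := Real.sq_sqrt (by linarith [hh.1])
  unfold AbI xminus xplus trigInt
  set s := Real.sqrt (1 + 4 * h) with hsdef
  have hd : ∀ θ ∈ uIcc (0:ℝ) Real.pi, HasDerivAt (fun θ => Real.sqrt (1 + s * Real.cos θ))
      (s * -Real.sin θ / (2 * Real.sqrt (1 + s * Real.cos θ))) θ := by
    intro θ _
    have h1 : HasDerivAt (fun θ : ℝ => 1 + s * Real.cos θ) (s * -Real.sin θ) θ :=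
      ((Real.hasDerivAt_cos θ).const_mul s).const_add 1
    exact h1.sqrt (w_pos hs θ).ne'
  have hcd : ContinuousOn (fun θ => s * -Real.sin θ / (2 * Real.sqrt (1 + s * Real.cos θ)))
      (uIcc (0:ℝ) Real.pi) := by
    refine ContinuousOn.div (by fun_prop) (by fun_prop) fun θ _ => ?_
    have := Real.sqrt_pos.2 (w_pos hs θ)
    positivity
  have key := intervalIntegral.integral_comp_mul_deriv hd hcd
    (g := fun x => x ^ k * Real.sqrt (2*h + x^2 - x^4/2)) (by fun_prop)
  simp only [Real.cos_zero, Real.cos_pi, mul_one] at key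
  rw [intervalIntegral.integral_symm, show 1 - s = 1 + s * -1 by ring, ← key,
    ← intervalIntegral.integral_neg, ← intervalIntegral.integral_const_mul,
    ← intervalIntegral.integral_const_mul]
  refine intervalIntegral.integral_congr fun θ hθ => ?_
  rw [uIcc_of_le Real.pi_pos.le] at hθ
  have hsin := Real.sin_nonneg_of_mem_Icc hθ
  have hw := w_pos hs θ
  have hr := Real.sqrt_pos.2 hw
  have hr2 : Real.sqrt (1 + s * Real.cos θ) ^ 2 = 1 + s * Real.cos θ := Real.sq_sqrt hw.le
  have hpow : (1 + s * Real.cos θ) ^ (((k:ℝ) - 1) / 2) =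
      Real.sqrt (1 + s * Real.cos θ) ^ k / Real.sqrt (1 + s * Real.cos θ) := by
    rw [← Real.rpow_natCast, ← Real.rpow_sub_one hr.ne', Real.sqrt_eq_rpow, ← Real.rpow_mul hw.le]
    congr 1; ring
  have hroot : Real.sqrt (2*h + Real.sqrt (1 + s * Real.cos θ)^2
      - Real.sqrt (1 + s * Real.cos θ)^4/2) = s * Real.sin θ / Real.sqrt 2 := by
    have h4 : Real.sqrt (1 + s * Real.cos θ)^4 = (1 + s * Real.cos θ)^2 := by
      rw [← hr2]; ring_nf
      rw [hr2]
    have hnn : 0 ≤ s * Real.sin θ := mul_nonneg hs.1.le hsin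
    have hfac : 2*h + (1 + s * Real.cos θ) - (1 + s * Real.cos θ)^2/2 =
        (s * Real.sin θ)^2 / 2 := by
      rw [mul_pow, Real.sin_sq]
      linear_combination (-1/2) * hsq
    rw [hr2, h4, hfac, Real.sqrt_div (sq_nonneg _), Real.sqrt_sq hnn]
  simp only [Function.comp]
  rw [hpow, hroot, ← hsq]
  field_simp

lemma omegaRatio_eq {h : ℝ} (hh : h ∈ Ioo (-(1:ℝ)/4) 0) :
    omegaRatio h = trigInt (1/2) (Real.sqrt (1 + 4 * h)) /
      trigInt (-1/2) (Real.sqrt (1 + 4 * h)) := by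
  have h0 : (1 + 4 * h) / Real.sqrt 2 ≠ 0 := by
    have : 0 < 1 + 4 * h := by linarith [hh.1]
    positivity
  unfold omegaRatio
  rw [AbI_eq 2 hh, AbI_eq 0 hh, mul_div_mul_left _ _ h0]
  norm_num

/-! ### The Riccati equation, bounds and limits -/

lemma omega_hasDerivAt {h : ℝ} (hh : h ∈ Ioo (-(1:ℝ)/4) 0) :
    HasDerivAt omegaRatio (((5/4) * (omegaRatio h)^2 + (2*h-1) * omegaRatio h - h) /
      (h * (4*h+1))) h := by
  have hs := sqrt_mem hh
  have hsq : Real.sqrt (1 + 4 * h) ^ 2 = 1 + 4 * h := Real.sq_sqrt (by linarith [hh.1])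
  have hev : omegaRatio =ᶠ[𝓝 h] fun h => trigInt (1/2) (Real.sqrt (1 + 4 * h)) /
      trigInt (-1/2) (Real.sqrt (1 + 4 * h)) := by
    filter_upwards [Ioo_mem_nhds hh.1 hh.2] with x hx using omegaRatio_eq hx
  refine HasDerivAt.congr_of_eventuallyEq ?_ hev
  have hds : HasDerivAt (fun h : ℝ => Real.sqrt (1 + 4 * h))
      (4 / (2 * Real.sqrt (1 + 4 * h))) h := by
    have h1 : HasDerivAt (fun h : ℝ => 1 + 4 * h) 4 h := by
      simpa using ((hasDerivAt_id h).const_mul 4).const_add 1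
    exact h1.sqrt (by linarith [hh.1])
  have hA := trigInt_pos (-1/2) hs
  have hdB := (hasDerivAt_trigInt (1/2) hs).comp h hds
  have hdA := (hasDerivAt_trigInt (-1/2) hs).comp h hds
  have := hdB.div hdA hA.ne'
  convert! this using 1
  have hJ := trigInt_recurrence hs
  rw [omegaRatio_eq hh]
  simp only [Function.comp]
  rw [show (1/2 - 1 : ℝ) = -1/2 by norm_num, show (-1/2 - 1 : ℝ) = -3/2 by norm_num]
  set s := Real.sqrt (1 + 4 * h)
  generalize trigInt (-1/2) s = A at *
  generalize trigInt (1/2) s = B at *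
  have h1 : (1 - s^2) ≠ 0 := by nlinarith [hs.1, hs.2]
  have hJ' : trigInt (-3/2) s = (5 * B - 4 * A) / (1 - s^2) := by
    rw [← hJ]; field_simp
  rw [hJ']
  have hhs : h = (s^2 - 1)/4 := by rw [hsq]; ring
  have hs0 := hs.1.ne'
  have h2 : s^2 - 1 ≠ 0 := by contrapose! h1; linarith
  have hA' := hA.ne'
  rw [hhs, show (1 - s^2) = -(s^2-1) by ring, show 4 * ((s^2-1)/4) + 1 = s^2 by ring]
  field_simp
  ring

lemma four_fifths_lt_omega {h : ℝ} (hh : h ∈ Ioo (-(1:ℝ)/4) 0) : 4/5 < omegaRatio h := by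
  have hs := sqrt_mem hh
  have hJ := trigInt_recurrence hs
  have hA := trigInt_pos (-1/2) hs
  have hJp := trigInt_pos (-3/2) hs
  rw [omegaRatio_eq hh, lt_div_iff₀ hA]
  have : 0 < 1 - Real.sqrt (1 + 4 * h) ^ 2 := by nlinarith [hs.1, hs.2]
  nlinarith [mul_pos this hJp]

lemma omega_bounds {h : ℝ} (hh : h ∈ Ioo (-(1:ℝ)/4) 0) :
    1 - Real.sqrt (1 + 4 * h) ≤ omegaRatio h ∧ omegaRatio h ≤ 1 + Real.sqrt (1 + 4 * h) := by
  have hs := sqrt_mem hh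
  have hA := trigInt_pos (-1/2) hs
  rw [omegaRatio_eq hh, le_div_iff₀ hA, div_le_iff₀ hA]
  set s := Real.sqrt (1 + 4 * h)
  have hi := fun p => (continuous_integrand p hs).intervalIntegrable (μ := volume) 0 Real.pi
  have e (θ : ℝ) : (1 + s * Real.cos θ) ^ (1/2:ℝ) =
      (1 + s * Real.cos θ) ^ (-1/2:ℝ) * (1 + s * Real.cos θ) := by
    rw [← Real.rpow_add_one (w_pos hs θ).ne']; norm_num
  have hpos (θ : ℝ) : 0 ≤ Real.sin θ ^ 2 * (1 + s * Real.cos θ) ^ (-1/2:ℝ) :=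
    mul_nonneg (sq_nonneg _) (Real.rpow_nonneg (w_pos hs θ).le _)
  unfold trigInt
  rw [← intervalIntegral.integral_const_mul, ← intervalIntegral.integral_const_mul]
  constructor
  · refine intervalIntegral.integral_mono_on Real.pi_pos.le ((hi _).const_mul _) (hi _) ?_
    intro θ _
    rw [e]
    nlinarith [mul_le_mul_of_nonneg_right (one_sub_le_w hs θ) (hpos θ)]
  · refine intervalIntegral.integral_mono_on Real.pi_pos.le (hi _) ((hi _).const_mul _) ?_
    intro θ _
    rw [e]
    nlinarith [mul_le_mul_of_nonneg_right (w_le_one_add hs θ) (hpos θ)]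

/-- As `s → 1` the integral `trigInt (-3/2) s` diverges, but only logarithmically; this crude
bound shows that `(1 - s²) · trigInt (-3/2) s` still tends to `0`. -/
lemma trigInt_bound {s : ℝ} (hs : s ∈ Ioo (0:ℝ) 1) :
    (1 - s ^ 2) * trigInt (-3/2) s ≤ 8 * Real.sqrt (1 - s) * Real.pi := by
  have hi := (continuous_integrand (-3/2) hs).intervalIntegrable (μ := volume) 0 Real.pi
  unfold trigInt
  rw [← intervalIntegral.integral_const_mul]
  have : (8 * Real.sqrt (1 - s) * Real.pi) =
      ∫ θ in (0:ℝ)..Real.pi, 8 * Real.sqrt (1 - s) := by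
    simp; ring
  rw [this]
  refine intervalIntegral.integral_mono_on Real.pi_pos.le (hi.const_mul _)
    intervalIntegrable_const fun θ _ => ?_
  have hw := w_pos hs θ
  have hs1 : 0 < 1 - s := by linarith [hs.2]
  have hr := Real.sqrt_pos.2 hw
  have ht := Real.sqrt_pos.2 hs1
  have hrt : Real.sqrt (1 - s) ≤ Real.sqrt (1 + s * Real.cos θ) :=
    Real.sqrt_le_sqrt (one_sub_le_w hs θ)
  have e : (1 + s * Real.cos θ) ^ (-3/2:ℝ) =
      1 / (Real.sqrt (1 + s * Real.cos θ) * (1 + s * Real.cos θ)) := by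
    rw [show (-3/2:ℝ) = -(1/2 + 1) by norm_num, Real.rpow_neg hw.le, Real.rpow_add_one hw.ne',
      Real.sqrt_eq_rpow]
    exact (one_div _).symm
  have hsin : Real.sin θ ^ 2 ≤ 4 * (1 + s * Real.cos θ) := by
    have h1 := Real.sin_sq_add_cos_sq θ
    have h2 := Real.neg_one_le_cos θ
    have h3 := Real.cos_le_one θ
    nlinarith [mul_nonneg hs.1.le (by linarith : 0 ≤ 1 + Real.cos θ),
      mul_nonneg hs1.le (by linarith : 0 ≤ 1 - Real.cos θ)]
  have hsq := Real.sq_sqrt hs1.le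
  rw [e, mul_one_div, ← mul_div_assoc, div_le_iff₀ (by positivity)]
  set w := 1 + s * Real.cos θ
  have h1 : 1 - s ^ 2 ≤ 2 * (Real.sqrt (1 - s) * Real.sqrt w) := by
    nlinarith [mul_le_mul_of_nonneg_left hrt ht.le]
  calc (1 - s^2) * Real.sin θ ^ 2 ≤ 2 * (Real.sqrt (1 - s) * Real.sqrt w) * (4 * w) :=
        mul_le_mul h1 hsin (sq_nonneg _) (by positivity)
    _ = _ := by ring

lemma pi_le_trigInt {s : ℝ} (hs : s ∈ Ioo (0:ℝ) 1) : Real.pi / 4 ≤ trigInt (-1/2) s := by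
  have hi := (continuous_integrand (-1/2) hs).intervalIntegrable (μ := volume) 0 Real.pi
  have h0 : Real.pi / 4 = ∫ θ in (0:ℝ)..Real.pi, Real.sin θ ^ 2 * (1/2) := by
    rw [intervalIntegral.integral_mul_const, integral_sin_sq]; simp; ring
  rw [h0]
  refine intervalIntegral.integral_mono_on Real.pi_pos.le
    (Continuous.intervalIntegrable (by fun_prop) _ _) hi fun θ _ => ?_
  refine mul_le_mul_of_nonneg_left ?_ (sq_nonneg _)
  have hw := w_pos hs θ
  have hr := Real.sqrt_pos.2 hw
  rw [show (-1/2:ℝ) = -(1/2) by norm_num, Real.rpow_neg hw.le, ← Real.sqrt_eq_rpow, one_div]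
  refine inv_anti₀ hr ?_
  rw [Real.sqrt_le_left (by norm_num)]
  linarith [w_le_one_add hs θ, hs.2]

lemma omega_upper {h : ℝ} (hh : h ∈ Ioo (-(1:ℝ)/4) 0) :
    omegaRatio h ≤ 4/5 + 7 * Real.sqrt (1 - Real.sqrt (1 + 4 * h)) := by
  have hs := sqrt_mem hh
  have hA := trigInt_pos (-1/2) hs
  rw [omegaRatio_eq hh, div_le_iff₀ hA]
  have h1 := trigInt_recurrence hs
  have h2 := trigInt_bound hs
  have h3 := pi_le_trigInt hs
  have h4 := mul_le_mul_of_nonneg_left h3 (Real.sqrt_nonneg (1 - Real.sqrt (1 + 4 * h)))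
  have h5 := mul_nonneg (Real.sqrt_nonneg (1 - Real.sqrt (1 + 4 * h))) Real.pi_pos.le
  nlinarith

lemma tendsto_omega_left :
    Tendsto omegaRatio (𝓝[Ioo (-(1:ℝ)/4) 0] (-(1:ℝ)/4)) (𝓝 1) := by
  have hl : Tendsto (fun h : ℝ => 1 - Real.sqrt (1 + 4 * h))
      (𝓝[Ioo (-(1:ℝ)/4) 0] (-(1:ℝ)/4)) (𝓝 1) := by
    have : Continuous (fun h : ℝ => 1 - Real.sqrt (1 + 4 * h)) := by fun_prop
    refine ((this.tendsto' (-(1:ℝ)/4) 1 ?_)).mono_left nhdsWithin_le_nhds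
    norm_num
  have hu : Tendsto (fun h : ℝ => 1 + Real.sqrt (1 + 4 * h))
      (𝓝[Ioo (-(1:ℝ)/4) 0] (-(1:ℝ)/4)) (𝓝 1) := by
    have : Continuous (fun h : ℝ => 1 + Real.sqrt (1 + 4 * h)) := by fun_prop
    refine ((this.tendsto' (-(1:ℝ)/4) 1 ?_)).mono_left nhdsWithin_le_nhds
    norm_num
  refine tendsto_of_tendsto_of_tendsto_of_le_of_le' hl hu ?_ ?_
  · filter_upwards [self_mem_nhdsWithin] with h hh using (omega_bounds hh).1
  · filter_upwards [self_mem_nhdsWithin] with h hh using (omega_bounds hh).2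

lemma tendsto_omega_right :
    Tendsto omegaRatio (𝓝[Ioo (-(1:ℝ)/4) 0] 0) (𝓝 (4/5)) := by
  have hu : Tendsto (fun h : ℝ => 4/5 + 7 * Real.sqrt (1 - Real.sqrt (1 + 4 * h)))
      (𝓝[Ioo (-(1:ℝ)/4) 0] 0) (𝓝 (4/5)) := by
    have : Continuous (fun h : ℝ => 4/5 + 7 * Real.sqrt (1 - Real.sqrt (1 + 4 * h))) := by
      fun_prop
    refine ((this.tendsto' 0 (4/5) ?_)).mono_left nhdsWithin_le_nhds
    norm_num
  refine tendsto_of_tendsto_of_tendsto_of_le_of_le' tendsto_const_nhds hu ?_ ?_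
  · filter_upwards [self_mem_nhdsWithin] with h hh using (four_fifths_lt_omega hh).le
  · filter_upwards [self_mem_nhdsWithin] with h hh using omega_upper hh

/-! ### Monotonicity and concavity -/

lemma exists_gt_left {f : ℝ → ℝ} {f' x a : ℝ} (hf : HasDerivAt f f' x) (hneg : f' < 0)
    (ha : a < x) : ∃ y ∈ Ioo a x, f x < f y := by
  have h1 := (hasDerivAt_iff_tendsto_slope_left_right.1 hf).1.eventually (gt_mem_nhds hneg)
  obtain ⟨y, hy, hya⟩ := (h1.and (Ioo_mem_nhdsLT ha)).exists
  refine ⟨y, hya, ?_⟩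
  rw [slope_def_field, div_neg_iff] at hy
  rcases hy with hy | hy <;> linarith [hya.2, hy.1, hy.2]

/-- A function starting from the limit `0` at the left end of an interval, and strictly
decreasing to first order at every point where it is nonnegative, is negative. -/
lemma neg_of_barrier {a b : ℝ} {f : ℝ → ℝ}
    (hd : ∀ x ∈ Ioo a b, ∃ f', HasDerivAt f f' x ∧ (0 ≤ f x → f' < 0))
    (hlim : Tendsto f (𝓝[Ioo a b] a) (𝓝 0)) : ∀ x ∈ Ioo a b, f x < 0 := by
  intro x hx
  by_contra! hfx
  obtain ⟨f', hf', hneg⟩ := hd x hx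
  obtain ⟨d, hd1, hxd⟩ := exists_gt_left hf' (hneg hfx) hx.1
  have hfd : 0 < f d := by linarith
  have hdb : d < b := hd1.2.trans hx.2
  rw [nhdsWithin_Ioo_eq_nhdsGT (hx.1.trans hx.2)] at hlim
  obtain ⟨e, he, hea⟩ := ((hlim.eventually (gt_mem_nhds hfd)).and
    (Ioo_mem_nhdsGT hd1.1)).exists
  have hsub : Icc e d ⊆ Ioo a b := fun y hy => ⟨hea.1.trans_le hy.1, hy.2.trans_lt hdb⟩
  -- The maximum of `f` over `[e, d]` is positive and not attained at `e`.
  obtain ⟨m, hm, hmax⟩ := isCompact_Icc.exists_isMaxOn (nonempty_Icc.2 hea.2.le)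
    (fun y hy => (hd y (hsub hy)).choose_spec.1.continuousAt.continuousWithinAt :
      ContinuousOn f (Icc e d))
  have hmd : f d ≤ f m := hmax (right_mem_Icc.2 hea.2.le)
  have hem : e < m := by
    rcases hm.1.eq_or_lt with h | h
    · rw [← h] at hmd; linarith
    · exact h
  obtain ⟨g', hg', hgneg⟩ := hd m (hsub hm)
  obtain ⟨y, hy, hym⟩ := exists_gt_left hg' (hgneg (by linarith)) hem
  have : f y ≤ f m := hmax ⟨hy.1.le, hy.2.le.trans hm.2⟩
  linarith

/-- The right-hand side of the Riccati equation along `ω`. -/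
noncomputable def riccatiRHS (h : ℝ) : ℝ :=
  (5/4) * (omegaRatio h)^2 + (2*h-1) * omegaRatio h - h

lemma hasDerivAt_riccatiRHS {h : ℝ} (hh : h ∈ Ioo (-(1:ℝ)/4) 0) :
    HasDerivAt riccatiRHS ((2 * omegaRatio h - 1) +
      (5/2 * omegaRatio h + 2 * h - 1) * (riccatiRHS h / (h * (4*h+1)))) h := by
  have hω := omega_hasDerivAt hh
  have h1 : HasDerivAt (fun h : ℝ => 2 * h - 1) 2 h := by
    simpa using ((hasDerivAt_id h).const_mul 2).sub_const 1
  have := (((hω.pow 2).const_mul (5/4)).add (h1.mul hω)).sub (hasDerivAt_id h)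
  convert! this using 1
  unfold riccatiRHS
  push_cast
  ring

lemma tendsto_riccatiRHS :
    Tendsto riccatiRHS (𝓝[Ioo (-(1:ℝ)/4) 0] (-(1:ℝ)/4)) (𝓝 0) := by
  have hid : Tendsto (fun h : ℝ => h) (𝓝[Ioo (-(1:ℝ)/4) 0] (-(1:ℝ)/4)) (𝓝 (-(1:ℝ)/4)) :=
    nhdsWithin_le_nhds
  have hω := tendsto_omega_left
  have := (((hω.pow 2).const_mul (5/4)).add (((hid.const_mul 2).sub_const 1).mul hω)).sub hid
  convert! this using 2
  norm_num

lemma riccatiRHS_pos {h : ℝ} (hh : h ∈ Ioo (-(1:ℝ)/4) 0) : 0 < riccatiRHS h := by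
  have key := neg_of_barrier (a := -(1:ℝ)/4) (b := 0) (f := fun h => -riccatiRHS h) ?_
    (by simpa using tendsto_riccatiRHS.neg) h hh
  · linarith
  intro x hx
  refine ⟨_, (hasDerivAt_riccatiRHS hx).neg, fun hN => ?_⟩
  have hω := four_fifths_lt_omega hx
  have hD : x * (4 * x + 1) < 0 := mul_neg_of_neg_of_pos hx.2 (by linarith [hx.1])
  have h1 : 0 ≤ riccatiRHS x / (x * (4*x+1)) := div_nonneg_of_nonpos (by linarith) hD.le
  have h2 := mul_nonneg (by linarith [hx.1] : 0 ≤ 5/2 * omegaRatio x + 2 * x - 1) h1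
  linarith

lemma deriv_omega {h : ℝ} (hh : h ∈ Ioo (-(1:ℝ)/4) 0) :
    deriv omegaRatio h = riccatiRHS h / (h * (4*h+1)) := (omega_hasDerivAt hh).deriv

lemma deriv_omega_neg {h : ℝ} (hh : h ∈ Ioo (-(1:ℝ)/4) 0) :
    riccatiRHS h / (h * (4*h+1)) < 0 :=
  div_neg_of_pos_of_neg (riccatiRHS_pos hh)
    (mul_neg_of_neg_of_pos hh.2 (by linarith [hh.1]))

/-- The quantity `-h (4h+1)² ω''(h)`, written without second derivatives by differentiating the
Riccati equation. The weight is chosen so that `neg_of_barrier` applies. -/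
noncomputable def weightedSecond (h : ℝ) : ℝ :=
  (4*h+1) * (1 - 2 * omegaRatio h) + (2 + 6*h - 5/2 * omegaRatio h) * (riccatiRHS h / h)

lemma hasDerivAt_weightedSecond {h : ℝ} (hh : h ∈ Ioo (-(1:ℝ)/4) 0) :
    HasDerivAt weightedSecond
      ((4*h+1) * (riccatiRHS h / (h * (4*h+1))) * (4 - 5/2 * (riccatiRHS h / (h * (4*h+1))))
        + weightedSecond h * ((8 + 8*h - 10 * omegaRatio h) / (-4 * h * (4*h+1)))) h := by
  have hω : HasDerivAt omegaRatio (riccatiRHS h / (h * (4*h+1))) h := omega_hasDerivAt hh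
  have hP := hasDerivAt_riccatiRHS hh
  have hid := hasDerivAt_id h
  have h0 : h ≠ 0 := hh.2.ne
  have h1 : 4 * h + 1 ≠ 0 := by linarith [hh.1]
  have h4 : HasDerivAt (fun h : ℝ => 4 * h + 1) 4 h := by
    simpa using (hid.const_mul 4).add_const 1
  have h6 : HasDerivAt (fun h : ℝ => 2 + 6 * h) 6 h := by
    simpa using (hid.const_mul 6).const_add 2
  have := (h4.mul ((hω.const_mul 2).const_sub 1)).add
    ((h6.sub (hω.const_mul (5/2))).mul (hP.div hid h0))
  convert! this using 1
  simp only [weightedSecond, id, Pi.sub_apply, Pi.div_apply]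
  field_simp
  ring

lemma weightedSecond_neg {h : ℝ} (hh : h ∈ Ioo (-(1:ℝ)/4) 0) : weightedSecond h < 0 := by
  refine neg_of_barrier (a := -(1:ℝ)/4) (b := 0) ?_ ?_ h hh
  · intro x hx
    refine ⟨_, hasDerivAt_weightedSecond hx, fun hG => ?_⟩
    have hω := four_fifths_lt_omega hx
    have hd := deriv_omega_neg hx
    have hc : 0 < 4 * x + 1 := by linarith [hx.1]
    have h1 : (4*x+1) * (riccatiRHS x / (x * (4*x+1))) *
        (4 - 5/2 * (riccatiRHS x / (x * (4*x+1)))) < 0 :=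
      mul_neg_of_neg_of_pos (mul_neg_of_pos_of_neg hc hd) (by linarith)
    have h2 : (8 + 8*x - 10 * omegaRatio x) / (-4 * x * (4*x+1)) ≤ 0 :=
      div_nonpos_of_nonpos_of_nonneg (by linarith [hx.2])
        (mul_nonneg (by linarith [hx.2]) hc.le)
    linarith [mul_nonpos_of_nonneg_of_nonpos hG h2]
  · have hid : Tendsto (fun h : ℝ => h) (𝓝[Ioo (-(1:ℝ)/4) 0] (-(1:ℝ)/4)) (𝓝 (-(1:ℝ)/4)) :=
      nhdsWithin_le_nhds
    have hω := tendsto_omega_left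
    have := (((hid.const_mul 4).add_const 1).mul ((hω.const_mul 2).const_sub 1)).add
      ((((hid.const_mul 6).const_add 2).sub (hω.const_mul (5/2))).mul
        (tendsto_riccatiRHS.div hid (by norm_num)))
    convert! this using 2
    norm_num

lemma deriv_deriv_omega_neg {h : ℝ} (hh : h ∈ Ioo (-(1:ℝ)/4) 0) :
    deriv (deriv omegaRatio) h < 0 := by
  have hev : deriv omegaRatio =ᶠ[𝓝 h] fun h => riccatiRHS h / (h * (4*h+1)) := by
    filter_upwards [Ioo_mem_nhds hh.1 hh.2] with x hx using deriv_omega hx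
  have h0 : h ≠ 0 := hh.2.ne
  have hc : 0 < 4 * h + 1 := by linarith [hh.1]
  have hid := hasDerivAt_id h
  have hD : HasDerivAt (fun h : ℝ => h * (4 * h + 1)) (8 * h + 1) h := by
    have := hid.mul ((hid.const_mul 4).add_const 1)
    convert! this using 1
    simp; ring
  have hmain : HasDerivAt (deriv omegaRatio) (weightedSecond h / (-h * (4*h+1)^2)) h := by
    refine HasDerivAt.congr_of_eventuallyEq ?_ hev
    have := (hasDerivAt_riccatiRHS hh).div hD (mul_ne_zero h0 hc.ne')
    convert! this using 1
    unfold weightedSecond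
    field_simp
    ring
  rw [hmain.deriv]
  exact div_neg_of_neg_of_pos (weightedSecond_neg hh) (mul_pos (by linarith [hh.2]) (by positivity))

/-! ### The integrals at the saddle level `h = 0` -/

lemma sqrt_saddle {x : ℝ} (hx : 0 ≤ x) :
    Real.sqrt (x^2 - x^4/2) = x * Real.sqrt (1 - x^2/2) := by
  rw [show x^2 - x^4/2 = x^2 * (1 - x^2/2) by ring, Real.sqrt_mul (sq_nonneg x),
    Real.sqrt_sq hx]

lemma hasDerivAt_rpow_saddle (p x : ℝ) (hp : 1 ≤ p) :
    HasDerivAt (fun x : ℝ => (1 - x^2/2) ^ p) (-x * p * (1 - x^2/2) ^ (p - 1)) x := by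
  have h1 : HasDerivAt (fun x : ℝ => 1 - x^2/2) (-x) x := by
    have := ((hasDerivAt_pow 2 x).div_const 2).const_sub 1
    convert! this using 1
    simp
  exact h1.rpow_const (Or.inr hp)

lemma saddle_zero : (2 * ∫ x in (0:ℝ)..Real.sqrt 2, Real.sqrt (x^2 - x^4/2)) = 4/3 := by
  have hle : (0:ℝ) ≤ Real.sqrt 2 := Real.sqrt_nonneg 2
  have key := intervalIntegral.integral_eq_sub_of_hasDerivAt
    (f := fun x : ℝ => -(2/3) * (1 - x^2/2) ^ (3/2:ℝ))
    (f' := fun x => Real.sqrt (x^2 - x^4/2)) (a := 0) (b := Real.sqrt 2) ?_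
    (Continuous.intervalIntegrable (by fun_prop) _ _)
  · rw [key]; norm_num
  intro x hx
  rw [uIcc_of_le hle] at hx
  convert! (hasDerivAt_rpow_saddle (3/2) x (by norm_num)).const_mul (-(2/3)) using 1
  rw [sqrt_saddle hx.1, Real.sqrt_eq_rpow]
  norm_num; ring

lemma saddle_two :
    (2 * ∫ x in (0:ℝ)..Real.sqrt 2, x^2 * Real.sqrt (x^2 - x^4/2)) = 16/15 := by
  have hle : (0:ℝ) ≤ Real.sqrt 2 := Real.sqrt_nonneg 2
  have key := intervalIntegral.integral_eq_sub_of_hasDerivAt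
    (f := fun x : ℝ => -(4/3) * (1 - x^2/2) ^ (3/2:ℝ) + 4/5 * (1 - x^2/2) ^ (5/2:ℝ))
    (f' := fun x => x^2 * Real.sqrt (x^2 - x^4/2)) (a := 0) (b := Real.sqrt 2) ?_
    (Continuous.intervalIntegrable (by fun_prop) _ _)
  · rw [key]; norm_num
  intro x hx
  rw [uIcc_of_le hle] at hx
  have hx2 : 0 ≤ 1 - x^2/2 := by
    have : x^2 ≤ Real.sqrt 2 ^ 2 := pow_le_pow_left₀ hx.1 hx.2 2
    rw [Real.sq_sqrt (by norm_num)] at this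
    linarith
  convert! ((hasDerivAt_rpow_saddle (3/2) x (by norm_num)).const_mul (-(4/3))).add
    ((hasDerivAt_rpow_saddle (5/2) x (by norm_num)).const_mul (4/5)) using 1
  have e : (1 - x^2/2) ^ (5/2 - 1:ℝ) = (1 - x^2/2) ^ (1/2:ℝ) * (1 - x^2/2) := by
    rw [← Real.rpow_add_one' hx2 (by norm_num)]; norm_num
  rw [sqrt_saddle hx.1, Real.sqrt_eq_rpow, e, show (3/2 - 1:ℝ) = 1/2 by norm_num]
  ring

/-- `ω` satisfies the Riccati equation `h(4h+1)ω' = (5/4)ω² + (2h−1)ω − h` on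
`(−1/4,0)`, tends to `1` at `−1/4⁺` and to `4/5` at `0⁻` (the latter because
`I₀(0) = 4/3` and `I₂(0) = 16/15`), and is strictly decreasing and strictly concave. -/
theorem omega_riccati :
    (∀ h ∈ Set.Ioo (-(1:ℝ)/4) 0,
      h * (4*h+1) * deriv omegaRatio h =
        (5/4) * (omegaRatio h)^2 + (2*h-1) * omegaRatio h - h ∧
      deriv omegaRatio h < 0 ∧ deriv (deriv omegaRatio) h < 0) ∧
    Filter.Tendsto omegaRatio (nhdsWithin (-(1:ℝ)/4) (Set.Ioo (-(1:ℝ)/4) 0)) (nhds 1) ∧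
    Filter.Tendsto omegaRatio (nhdsWithin 0 (Set.Ioo (-(1:ℝ)/4) 0)) (nhds (4/5)) ∧
    (2 * ∫ x in (0:ℝ)..Real.sqrt 2, Real.sqrt (x^2 - x^4/2)) = 4/3 ∧
    (2 * ∫ x in (0:ℝ)..Real.sqrt 2, x^2 * Real.sqrt (x^2 - x^4/2)) = 16/15 := by
  refine ⟨fun h hh => ⟨?_, ?_, deriv_deriv_omega_neg hh⟩, tendsto_omega_left,
    tendsto_omega_right, saddle_zero, saddle_two⟩
  · have h0 : h ≠ 0 := hh.2.ne
    have hc : 4 * h + 1 ≠ 0 := by linarith [hh.1]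
    rw [deriv_omega hh, mul_div_cancel₀ _ (mul_ne_zero h0 hc)]
    rfl
  · rw [deriv_omega hh]
    exact deriv_omega_neg hh
end

section
/- For every (α₀, α₁, γ₀, γ₁) ∈ ℝ⁴ with (α₀, α₁, γ₀, γ₁) ≠ (0, 0, 0, 0), the set of zeros in (−1/4, 0) of the function h ↦ (α₀ + α₁·h)·I₀(h) + (γ₀ + γ₁·h)·I₂(h) has at most 3 elements. -/
/-!
With `r = √(1 + 4h)` and `x² = 1 - r cos θ`, the integrals `I₀`, `I₂` become moments
`∫₀^π (1 - r cos θ)^s dθ`.  In the variable `t = 4h ∈ (-1, 0)` and with `A`, `B` the moments for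
`s = -1/2, 1/2` (proportional to `dI₀/dh`, `dI₂/dh`), the recursion `cosMoment_rec` gives
`I₀ ∝ tA + B`, `5 I₂ ∝ tA + (3t+4)B` and the Picard–Fuchs system
`4(1+t) B' = B - A`, `4t(1+t) A' = -(tA + B)`.

The combination vanishes at `t = -1`, where the oval collapses to the center, so by Rolle four zeros
in `(-1, 0)` force four zeros of its derivative, which equals `A · (p + q R)` with `R = B / A` and
affine `p`, `q`; the linear map from the given coefficients to those of `p`, `q` is injective.

It remains that `1, t, R, tR` admit no nontrivial combination with four zeros
(`RiccatiRatio.coeffs_eq_zero`).  Two further uses of Rolle leave two zeros of `q₀ R'' + q₁ (tR)''`.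
Since `R'' < 0`, it suffices that `V = (tR)''/R'' = t + 2R'/R''` is injective.  The Riccati equation
`4t(t+1) R' = R² + 2tR - t` turns `V'` into minus an explicit sum of squares
(`RiccatiRatio.hasDerivAt_V`), i.e. the Schwarzian derivative of `R` has constant sign.  The only
bounds needed are `-t < R`, which says `I₀ > 0`, and `0 < R ≤ 1`.
-/

open Set

namespace AbelianOval

open Real Filter Topology intervalIntegral

/-! ### Moments of `1 - r cos θ` -/

/-- The moments `M_s(r) = ∫₀^π (1 - r cos θ)^s dθ`.  Under `x² = 1 - r cos θ`, `r² = 1 + 4h`, they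
carry the Abelian integrals and their derivatives in `h`. -/
noncomputable def cosMoment (s r : ℝ) : ℝ := ∫ θ in (0:ℝ)..π, (1 - r * cos θ) ^ s

lemma base_pos {r : ℝ} (hr : |r| < 1) (θ : ℝ) : 0 < 1 - r * cos θ := by
  have h1 : |r * cos θ| < 1 := by
    rw [abs_mul]
    exact lt_of_le_of_lt (mul_le_of_le_one_right (abs_nonneg _) (abs_cos_le_one θ)) hr
  linarith [le_abs_self (r * cos θ)]

lemma continuous_base_rpow {r : ℝ} (hr : |r| < 1) (s : ℝ) :
    Continuous fun θ : ℝ => (1 - r * cos θ) ^ s :=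
  Continuous.rpow_const (by fun_prop) fun θ => Or.inl (base_pos hr θ).ne'

/-- Differentiation under the integral sign; `r = 0` is allowed. -/
lemma hasDerivAt_cosMoment_integral {r : ℝ} (hr : |r| < 1) (s : ℝ) :
    HasDerivAt (cosMoment s)
      (∫ θ in (0:ℝ)..π, -cos θ * s * (1 - r * cos θ) ^ (s - 1)) r := by
  obtain ⟨ρ, h1, h2⟩ := exists_between hr
  have hcont : ContinuousOn (fun p : ℝ × ℝ => -cos p.2 * s * (1 - p.1 * cos p.2) ^ (s - 1))
      (Set.Icc (-ρ) ρ ×ˢ Set.Icc 0 π) := by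
    refine ContinuousOn.mul (by fun_prop) (ContinuousOn.rpow_const (by fun_prop) ?_)
    intro p hp
    exact Or.inl (base_pos (lt_of_le_of_lt (abs_le.2 hp.1) h2) _).ne'
  obtain ⟨C, hC⟩ := (isCompact_Icc.prod isCompact_Icc).exists_bound_of_continuousOn hcont
  have hnhds : Set.Icc (-ρ) ρ ∈ 𝓝 r := Icc_mem_nhds (abs_lt.1 h1).1 (abs_lt.1 h1).2
  refine (intervalIntegral.hasDerivAt_integral_of_dominated_loc_of_deriv_le (bound := fun _ => C)
    (F := fun r θ => (1 - r * cos θ) ^ s)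
    (F' := fun r θ => -cos θ * s * (1 - r * cos θ) ^ (s - 1)) hnhds ?_ ?_ ?_ ?_ ?_ ?_).2
  · filter_upwards [hnhds] with x hx
    exact (continuous_base_rpow (lt_of_le_of_lt (abs_le.2 hx) h2) s).aestronglyMeasurable
  · exact (continuous_base_rpow hr s).intervalIntegrable _ _
  · exact (Continuous.mul (by fun_prop) (continuous_base_rpow hr (s - 1))).aestronglyMeasurable
  · refine Eventually.of_forall fun θ hθ x hx => hC (x, θ) ⟨hx, ?_⟩
    rw [Set.uIoc_of_le pi_pos.le] at hθ
    exact ⟨hθ.1.le, hθ.2⟩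
  · exact intervalIntegrable_const
  · refine Eventually.of_forall fun θ _ x hx => ?_
    have hp := base_pos (lt_of_le_of_lt (abs_le.2 hx) h2) θ
    have h : HasDerivAt (fun x : ℝ => 1 - x * cos θ) (-cos θ) x := by
      simpa using ((hasDerivAt_id x).mul_const (cos θ)).const_sub 1
    exact h.rpow_const (Or.inl hp.ne')

lemma base_rpow_succ {r : ℝ} (hr : |r| < 1) (s θ : ℝ) :
    (1 - r * cos θ) ^ (s + 1) = (1 - r * cos θ) ^ s * (1 - r * cos θ) :=
  rpow_add_one (base_pos hr θ).ne' s

lemma hasDerivAt_cosMoment {r : ℝ} (hr : |r| < 1) (h0 : r ≠ 0) (s : ℝ) :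
    HasDerivAt (cosMoment s) (s * (cosMoment s r - cosMoment (s - 1) r) / r) r := by
  convert hasDerivAt_cosMoment_integral hr s using 1
  have i1 := (continuous_base_rpow hr s).intervalIntegrable (μ := MeasureTheory.volume) 0 π
  have i2 := (continuous_base_rpow hr (s - 1)).intervalIntegrable (μ := MeasureTheory.volume) 0 π
  rw [cosMoment, cosMoment, ← integral_sub i1 i2, mul_div_right_comm, ← integral_const_mul]
  refine integral_congr fun θ _ => ?_
  have := base_rpow_succ hr (s - 1) θ
  simp only [sub_add_cancel] at this ⊢
  rw [this]
  field_simp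
  ring

/-- `∫₀^π r² sin² θ (1 - r cos θ)^s dθ` through moments: with `w = 1 - r cos θ`,
`r² sin² θ = (r² - 1) + 2w - w²`. -/
lemma integral_sin_sq_mul {r : ℝ} (hr : |r| < 1) (s : ℝ) :
    ∫ θ in (0:ℝ)..π, r ^ 2 * sin θ ^ 2 * (1 - r * cos θ) ^ s =
      (r ^ 2 - 1) * cosMoment s r + 2 * cosMoment (s + 1) r - cosMoment (s + 2) r := by
  have i (s) := (continuous_base_rpow hr s).intervalIntegrable (μ := MeasureTheory.volume) 0 π
  rw [cosMoment, cosMoment, cosMoment, ← integral_const_mul, ← integral_const_mul,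
    ← integral_add ((i _).const_mul _) ((i _).const_mul _),
    ← integral_sub (((i _).const_mul _).add ((i _).const_mul _)) (i _)]
  refine integral_congr fun θ _ => ?_
  have h1 := base_rpow_succ hr s θ
  have h2 := base_rpow_succ hr (s + 1) θ
  rw [add_assoc, one_add_one_eq_two] at h2
  rw [h2, h1, sin_sq]
  ring

/-- Three-term recursion between moments, obtained by integrating the exact derivative of
`sin θ (1 - r cos θ)^s`. -/
lemma cosMoment_rec {r : ℝ} (hr : |r| < 1) (s : ℝ) :
    (1 + s) * cosMoment (s + 1) r - (1 + 2 * s) * cosMoment s r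
      - s * (r ^ 2 - 1) * cosMoment (s - 1) r = 0 := by
  have i (s) := (continuous_base_rpow hr s).intervalIntegrable (μ := MeasureTheory.volume) 0 π
  have hd : ∀ θ ∈ Set.uIcc 0 π, HasDerivAt (fun θ => -r * (sin θ * (1 - r * cos θ) ^ s))
      ((1 + s) * (1 - r * cos θ) ^ (s + 1) - (1 + 2 * s) * (1 - r * cos θ) ^ s
      - s * (r ^ 2 - 1) * (1 - r * cos θ) ^ (s - 1)) θ := by
    intro θ _
    have h : HasDerivAt (fun θ : ℝ => 1 - r * cos θ) (r * sin θ) θ := by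
      simpa using ((hasDerivAt_cos θ).const_mul r).const_sub 1
    refine HasDerivAt.congr_deriv (((hasDerivAt_sin θ).mul
      (h.rpow_const (p := s) (Or.inl (base_pos hr θ).ne'))).const_mul (-r)) ?_
    have h1 := base_rpow_succ hr s θ
    have h2 := base_rpow_succ hr (s - 1) θ
    rw [sub_add_cancel] at h2
    rw [h1, h2]
    linear_combination (-s * r ^ 2 * (1 - r * cos θ) ^ (s - 1)) * sin_sq_add_cos_sq θ
  have hi : IntervalIntegrable (fun θ => (1 + s) * (1 - r * cos θ) ^ (s + 1)
      - (1 + 2 * s) * (1 - r * cos θ) ^ s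
      - s * (r ^ 2 - 1) * (1 - r * cos θ) ^ (s - 1)) MeasureTheory.volume 0 π :=
    (((i _).const_mul _).sub ((i _).const_mul _)).sub ((i _).const_mul _)
  have := integral_eq_sub_of_hasDerivAt hd hi
  rw [integral_sub (((i _).const_mul _).sub ((i _).const_mul _)) ((i _).const_mul _),
    integral_sub ((i _).const_mul _) ((i _).const_mul _), integral_const_mul, integral_const_mul,
    integral_const_mul] at this
  simpa [cosMoment] using this

/-! ### The elliptic integrals in the variable `t = 4h` -/

/-- `A(t) = ∫₀^π w^(-1/2) dθ` with `w = 1 - r cos θ`, `r = √(1+t)`, where `t = 4h`; up to the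
factor `√2` this is `dI₀/dh`. -/
noncomputable def ellA (t : ℝ) : ℝ := cosMoment (-1 / 2) √(1 + t)

/-- `B(t) = ∫₀^π w^(1/2) dθ` with `w = 1 - r cos θ`, `r = √(1+t)`, where `t = 4h`; up to the
factor `√2` this is `dI₂/dh`. -/
noncomputable def ellB (t : ℝ) : ℝ := cosMoment (1 / 2) √(1 + t)

lemma abs_sqrt_lt {t : ℝ} (ht : t < 0) : |√(1 + t)| < 1 := by
  rw [abs_of_nonneg (sqrt_nonneg _), sqrt_lt' one_pos]
  linarith

/-- The substitution `x = √(1 - r cos θ)`, under which `2h + x² - x⁴/2 = r² sin² θ / 2`. -/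
lemma AbI_eq {h : ℝ} (h1 : -1 / 4 < h) (h2 : h < 0) (k : ℕ) (s : ℝ) (hs : (k : ℝ) = 2 * s + 1) :
    AbI k h = (√2)⁻¹ * ∫ θ in (0:ℝ)..π,
      √(1 + 4 * h) ^ 2 * sin θ ^ 2 * (1 - √(1 + 4 * h) * cos θ) ^ s := by
  have hr1 : |√(1 + 4 * h)| < 1 := abs_sqrt_lt (by linarith)
  have hr2 : √(1 + 4 * h) ^ 2 = 1 + 4 * h := sq_sqrt (by linarith)
  have hr0 : 0 ≤ √(1 + 4 * h) := sqrt_nonneg _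
  rw [AbI, xminus, xplus]
  set r := √(1 + 4 * h) with hr
  have hder : ∀ θ ∈ Set.uIcc 0 π, HasDerivAt (fun θ => √(1 - r * cos θ))
      (r * sin θ / (2 * √(1 - r * cos θ))) θ := by
    intro θ _
    have h : HasDerivAt (fun θ : ℝ => 1 - r * cos θ) (r * sin θ) θ := by
      simpa using ((hasDerivAt_cos θ).const_mul r).const_sub 1
    exact h.sqrt (base_pos hr1 θ).ne'
  have hc : ContinuousOn (fun θ => r * sin θ / (2 * √(1 - r * cos θ))) (Set.uIcc 0 π) := by
    refine ContinuousOn.div (by fun_prop) (by fun_prop) fun θ _ => ?_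
    have := sqrt_pos.2 (base_pos hr1 θ)
    positivity
  have := integral_comp_mul_deriv hder hc
    (g := fun x => x ^ k * √(2 * h + x ^ 2 - x ^ 4 / 2)) (by fun_prop)
  simp only [cos_zero, cos_pi, mul_one, mul_neg, sub_neg_eq_add] at this
  rw [← this, ← integral_const_mul, ← integral_const_mul]
  refine integral_congr fun θ hθ => ?_
  rw [Set.uIcc_of_le pi_pos.le] at hθ
  have hsin := sin_nonneg_of_mem_Icc hθ
  have hw := base_pos hr1 θ
  have e1 : √(2 * h + √(1 - r * cos θ) ^ 2 - √(1 - r * cos θ) ^ 4 / 2) = r * sin θ / √2 := by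
    have e4 : √(1 - r * cos θ) ^ 4 = (1 - r * cos θ) ^ 2 := by
      rw [show (4 : ℕ) = 2 * 2 from rfl, pow_mul, sq_sqrt hw.le]
    rw [e4, sq_sqrt hw.le, eq_div_iff (by positivity), ← sqrt_mul' _ (by norm_num)]
    rw [show (2 * h + (1 - r * cos θ) - (1 - r * cos θ) ^ 2 / 2) * 2 = (r * sin θ) ^ 2 by
      linear_combination -hr2 - r ^ 2 * sin_sq_add_cos_sq θ]
    exact sqrt_sq (mul_nonneg hr0 hsin)
  have e2 : √(1 - r * cos θ) ^ k = (1 - r * cos θ) ^ s * √(1 - r * cos θ) := by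
    rw [sqrt_eq_rpow, ← rpow_natCast, ← rpow_mul hw.le, ← rpow_add hw, hs]
    congr 1
    ring
  simp only [Function.comp]
  rw [e1, e2]
  have := sqrt_pos.2 hw
  field_simp

lemma cosMoment_pos {r : ℝ} (hr : |r| < 1) (s : ℝ) : 0 < cosMoment s r :=
  intervalIntegral_pos_of_pos ((continuous_base_rpow hr s).intervalIntegrable _ _)
    (fun θ => rpow_pos_of_pos (base_pos hr θ) s) pi_pos

lemma ellA_pos {t : ℝ} (ht : t < 0) : 0 < ellA t := cosMoment_pos (abs_sqrt_lt ht) _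

lemma ellB_pos {t : ℝ} (ht : t < 0) : 0 < ellB t := cosMoment_pos (abs_sqrt_lt ht) _

lemma continuousAt_cosMoment_sqrt {t : ℝ} (ht : t < 0) (s : ℝ) :
    ContinuousAt (fun t => cosMoment s √(1 + t)) t :=
  ContinuousAt.comp (f := fun t : ℝ => √(1 + t))
    (hasDerivAt_cosMoment_integral (abs_sqrt_lt ht) s).continuousAt (by fun_prop)

lemma hasDerivAt_cosMoment_sqrt {t : ℝ} (h1 : -1 < t) (h2 : t < 0) (s : ℝ) :
    HasDerivAt (fun t => cosMoment s √(1 + t))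
      (s * (cosMoment s √(1 + t) - cosMoment (s - 1) √(1 + t)) / (2 * (1 + t))) t := by
  have hp : 0 < 1 + t := by linarith
  have hr := sqrt_pos.2 hp
  have hs : HasDerivAt (fun t : ℝ => √(1 + t)) (1 / (2 * √(1 + t))) t :=
    ((hasDerivAt_id t).const_add 1).sqrt hp.ne'
  refine ((hasDerivAt_cosMoment (abs_sqrt_lt h2) hr.ne' s).comp t hs).congr_deriv ?_
  have h : √(1 + t) * √(1 + t) = 1 + t := mul_self_sqrt hp.le
  field_simp
  rw [sq, h]
  ring

lemma hasDerivAt_ellB {t : ℝ} (h1 : -1 < t) (h2 : t < 0) :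
    HasDerivAt ellB ((ellB t - ellA t) / (4 * (1 + t))) t := by
  have hp : 0 < 1 + t := by linarith
  refine (hasDerivAt_cosMoment_sqrt h1 h2 (1 / 2)).congr_deriv ?_
  rw [show (1 / 2 - 1 : ℝ) = -1 / 2 by norm_num, ← ellA, ← ellB]
  field_simp
  ring

lemma hasDerivAt_ellA {t : ℝ} (h1 : -1 < t) (h2 : t < 0) :
    HasDerivAt ellA (-(t * ellA t + ellB t) / (4 * t * (1 + t))) t := by
  have hp : 0 < 1 + t := by linarith
  refine (hasDerivAt_cosMoment_sqrt h1 h2 (-1 / 2)).congr_deriv ?_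
  have h := cosMoment_rec (abs_sqrt_lt h2) (-1 / 2)
  rw [sq_sqrt hp.le, show (-1 / 2 + 1 : ℝ) = 1 / 2 by norm_num, ← ellA, ← ellB] at h
  rw [← ellA]
  have := h2.ne
  rw [show (-1 / 2 - 1 : ℝ) = -3 / 2 by norm_num] at h ⊢
  generalize cosMoment (-3 / 2) √(1 + t) = C at h ⊢
  field_simp
  linear_combination 8 * h

/-- `t A + B` is a positive multiple of `I₀`. -/
lemma ellA_add_ellB_eq {t : ℝ} (h1 : -1 ≤ t) (h2 : t < 0) :
    ∫ θ in (0:ℝ)..π, √(1 + t) ^ 2 * sin θ ^ 2 * (1 - √(1 + t) * cos θ) ^ (-1 / 2 : ℝ) =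
      2 / 3 * (t * ellA t + ellB t) := by
  have hp : 0 ≤ 1 + t := by linarith
  have h := cosMoment_rec (abs_sqrt_lt h2) (1 / 2)
  rw [integral_sin_sq_mul (abs_sqrt_lt h2)]
  rw [sq_sqrt hp, show (1 / 2 + 1 : ℝ) = 3 / 2 by norm_num,
    show (1 / 2 - 1 : ℝ) = -1 / 2 by norm_num, ← ellA, ← ellB] at h
  rw [sq_sqrt hp, show (-1 / 2 + 1 : ℝ) = 1 / 2 by norm_num,
    show (-1 / 2 + 2 : ℝ) = 3 / 2 by norm_num, ← ellA, ← ellB]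
  linear_combination -2 / 3 * h

lemma integral_ellI2_eq {t : ℝ} (h1 : -1 ≤ t) (h2 : t < 0) :
    ∫ θ in (0:ℝ)..π, √(1 + t) ^ 2 * sin θ ^ 2 * (1 - √(1 + t) * cos θ) ^ (1 / 2 : ℝ) =
      2 / 15 * (t * ellA t + (3 * t + 4) * ellB t) := by
  have hp : 0 ≤ 1 + t := by linarith
  have h := cosMoment_rec (abs_sqrt_lt h2) (1 / 2)
  have h' := cosMoment_rec (abs_sqrt_lt h2) (3 / 2)
  rw [integral_sin_sq_mul (abs_sqrt_lt h2)]
  rw [sq_sqrt hp, show (1 / 2 + 1 : ℝ) = 3 / 2 by norm_num,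
    show (1 / 2 - 1 : ℝ) = -1 / 2 by norm_num, ← ellA, ← ellB] at h
  rw [sq_sqrt hp, show (3 / 2 + 1 : ℝ) = 5 / 2 by norm_num,
    show (3 / 2 - 1 : ℝ) = 1 / 2 by norm_num, ← ellB] at h'
  rw [sq_sqrt hp, show (1 / 2 + 1 : ℝ) = 3 / 2 by norm_num,
    show (1 / 2 + 2 : ℝ) = 5 / 2 by norm_num, ← ellB]
  linear_combination -2 / 5 * h' + 4 / 15 * h

lemma AbI_zero_eq {h : ℝ} (h1 : -1 / 4 < h) (h2 : h < 0) :
    AbI 0 h = (√2)⁻¹ * (2 / 3 * (4 * h * ellA (4 * h) + ellB (4 * h))) := by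
  rw [AbI_eq h1 h2 0 (-1 / 2) (by norm_num),
    ellA_add_ellB_eq (by linarith) (by linarith)]

lemma AbI_two_eq {h : ℝ} (h1 : -1 / 4 < h) (h2 : h < 0) :
    AbI 2 h = (√2)⁻¹ * (2 / 15 * (4 * h * ellA (4 * h) + (3 * (4 * h) + 4) * ellB (4 * h))) := by
  rw [AbI_eq h1 h2 2 (1 / 2) (by norm_num),
    integral_ellI2_eq (by linarith) (by linarith)]

lemma ellA_add_ellB_pos {t : ℝ} (h1 : -1 < t) (h2 : t < 0) : 0 < t * ellA t + ellB t := by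
  have hr := abs_sqrt_lt h2
  have hr0 : 0 < √(1 + t) := sqrt_pos.2 (by linarith)
  have h : 0 < ∫ θ in (0:ℝ)..π,
      √(1 + t) ^ 2 * sin θ ^ 2 * (1 - √(1 + t) * cos θ) ^ (-1 / 2 : ℝ) := by
    refine intervalIntegral_pos_of_pos_on ?_ (fun θ hθ => ?_) pi_pos
    · exact (Continuous.mul (by fun_prop) (continuous_base_rpow hr _)).intervalIntegrable _ _
    · have := sin_pos_of_mem_Ioo hθ
      have := rpow_pos_of_pos (base_pos hr θ) (-1 / 2)
      positivity
  rw [ellA_add_ellB_eq h1.le h2] at h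
  linarith

/-- Pointwise `w^(1/2) ≤ w^(-1/2) + (w - 1)` for `w = 1 - r cos θ`, and `w - 1` has mean zero. -/
lemma ellB_le_ellA {t : ℝ} (ht : t < 0) : ellB t ≤ ellA t := by
  have hr := abs_sqrt_lt ht
  set r := √(1 + t) with hrdef
  have i (s) := (continuous_base_rpow hr s).intervalIntegrable (μ := MeasureTheory.volume) 0 π
  have i2 : IntervalIntegrable (fun θ => -r * cos θ) MeasureTheory.volume 0 π :=
    Continuous.intervalIntegrable (by fun_prop) _ _
  have h : ∫ θ in (0:ℝ)..π, (1 - r * cos θ) ^ (1 / 2 : ℝ) ≤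
      ∫ θ in (0:ℝ)..π, ((1 - r * cos θ) ^ (-1 / 2 : ℝ) + -r * cos θ) := by
    refine integral_mono_on pi_pos.le (i _) ((i _).add i2) fun θ _ => ?_
    have hw := base_pos hr θ
    have hu := sqrt_pos.2 hw
    have hsq := mul_self_sqrt hw.le
    rw [neg_div, rpow_neg hw.le, ← sqrt_eq_rpow]
    set u := √(1 - r * cos θ)
    have h1 : -r * cos θ = u * u - 1 := by linarith
    have h2 : u⁻¹ + (u * u - 1) - u = (1 - u) ^ 2 * (1 + u) / u := by field_simp; ring
    have : 0 ≤ (1 - u) ^ 2 * (1 + u) / u := by positivity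
    rw [h1]
    linarith
  rw [integral_add (i _) i2, intervalIntegral.integral_const_mul, integral_cos] at h
  rw [sin_pi, sin_zero, sub_zero, mul_zero, add_zero] at h
  exact h

/-- At the center, `t = -1`, both integrals are `π`. -/
lemma ell_neg_one : ellA (-1) = π ∧ ellB (-1) = π := by
  constructor <;> simp [ellA, ellB, cosMoment]

/-! ### Riccati equation and Chebyshev property -/

/-- A solution of the Riccati equation `4t(t+1) R' = R² + 2tR - t` on `(-1, 0)` inside the region
`-t < R ≤ 1`, `0 < R`. -/
structure RiccatiRatio (R : ℝ → ℝ) : Prop where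
  deriv : ∀ t, -1 < t → t < 0 → HasDerivAt R ((R t ^ 2 + 2 * t * R t - t) / (4 * t * (t + 1))) t
  pos : ∀ t, -1 < t → t < 0 → 0 < R t
  le_one : ∀ t, -1 < t → t < 0 → R t ≤ 1
  add_pos : ∀ t, -1 < t → t < 0 → 0 < R t + t

/-- The numerator of the second derivative: `R'' = M / (4t(t+1))²`. -/
def riccatiM (R t : ℝ) : ℝ := 2 * (R + t) * (R ^ 2 - 2 * (t + 1) * R + t)

namespace RiccatiRatio

variable {R : ℝ → ℝ}

lemma M_neg (hR : RiccatiRatio R) {t : ℝ} (h1 : -1 < t) (h2 : t < 0) : riccatiM (R t) t < 0 := by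
  have a := hR.pos t h1 h2
  have b := hR.le_one t h1 h2
  have c := hR.add_pos t h1 h2
  -- The quadratic factor is convex in `R` and negative at `R = 0` and at `R = 1`.
  have : R t ^ 2 - 2 * (t + 1) * R t + t < 0 := by
    nlinarith [mul_nonneg a.le (sub_nonneg.2 b), mul_nonneg a.le (by linarith : (0:ℝ) ≤ 1 + t)]
  rw [riccatiM]
  exact mul_neg_of_pos_of_neg (by linarith) this

lemma hasDerivAt_num (hR : RiccatiRatio R) {t : ℝ} (h1 : -1 < t) (h2 : t < 0) :
    HasDerivAt (fun t => R t ^ 2 + 2 * t * R t - t)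
      ((2 * R t + 2 * t) * ((R t ^ 2 + 2 * t * R t - t) / (4 * t * (t + 1))) + 2 * R t - 1) t := by
  have hd := hR.deriv t h1 h2
  refine (((hd.pow 2).add (((hasDerivAt_id t).const_mul 2).mul hd)).sub
    (hasDerivAt_id t)).congr_deriv ?_
  simp
  ring

lemma hasDerivAt_den (t : ℝ) : HasDerivAt (fun t : ℝ => 4 * t * (t + 1)) (8 * t + 4) t := by
  refine (((hasDerivAt_id t).const_mul 4).mul ((hasDerivAt_id t).add_const 1)).congr_deriv ?_
  simp
  ring

lemma hasDerivAt_M (hR : RiccatiRatio R) {t : ℝ} (h1 : -1 < t) (h2 : t < 0) :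
    HasDerivAt (fun t => riccatiM (R t) t)
      (2 * ((R t ^ 2 + 2 * t * R t - t) / (4 * t * (t + 1)) + 1) *
          (R t ^ 2 - 2 * (t + 1) * R t + t) +
        2 * (R t + t) * ((2 * R t - 2 * (t + 1)) *
          ((R t ^ 2 + 2 * t * R t - t) / (4 * t * (t + 1))) - 2 * R t + 1)) t := by
  have hd := hR.deriv t h1 h2
  have hi := hasDerivAt_id t
  refine (((hd.add hi).const_mul 2).mul
    (((hd.pow 2).sub (((hi.add_const 1).const_mul 2).mul hd)).add hi)).congr_deriv ?_
  simp
  left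
  ring

lemma hasDerivAt_deriv (hR : RiccatiRatio R) {t : ℝ} (h1 : -1 < t) (h2 : t < 0) :
    HasDerivAt (fun t => (R t ^ 2 + 2 * t * R t - t) / (4 * t * (t + 1)))
      (riccatiM (R t) t / (4 * t * (t + 1)) ^ 2) t := by
  have h3 : t + 1 ≠ 0 := by linarith
  have h4 := h2.ne
  refine ((hR.hasDerivAt_num h1 h2).div (hasDerivAt_den t) (by positivity)).congr_deriv ?_
  rw [riccatiM]
  field_simp
  ring

/-- `V = t + 2 R'/R''`, the quotient of the second derivatives of `t R` and `R`, has
`V' = -(2 R' R''' - 3 R''²) / R''²`.  With `x = R + t`, `σ = t² + t`, the Riccati equation turns the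
bracket into the sum of squares written below, up to the positive factor `(4t(t+1))⁴`, so `V' < 0`:
the Schwarzian derivative of `R` does not vanish. -/
lemma hasDerivAt_V (hR : RiccatiRatio R) {t : ℝ} (h1 : -1 < t) (h2 : t < 0) :
    HasDerivAt (fun t => t + 2 * ((R t ^ 2 + 2 * t * R t - t) * (4 * t * (t + 1)) /
        riccatiM (R t) t))
      (-(4 * (-(t ^ 2 + t) * (3 * ((R t + t) ^ 2 + (t ^ 2 + t)) - 2 * (4 * t + 2) * (R t + t)) ^ 2
        + 4 * (R t + t) ^ 4 + 4 * (t ^ 2 + t) ^ 2 * (R t + t) ^ 2) / riccatiM (R t) t ^ 2)) t := by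
  have h3 : t + 1 ≠ 0 := by linarith
  have h4 := h2.ne
  have hM := (hR.M_neg h1 h2).ne
  refine ((hasDerivAt_id t).add ((((hR.hasDerivAt_num h1 h2).mul (hasDerivAt_den t)).div
    (hR.hasDerivAt_M h1 h2) hM).const_mul 2)).congr_deriv ?_
  simp only [Pi.mul_apply]
  field_simp
  simp only [riccatiM]
  ring

/-- `V` is injective: by Rolle, a repeated value would give a zero of `V'`. -/
lemma V_ne (hR : RiccatiRatio R) {u v : ℝ} (h1 : -1 < u) (huv : u < v) (h2 : v < 0) :
    u + 2 * ((R u ^ 2 + 2 * u * R u - u) * (4 * u * (u + 1)) / riccatiM (R u) u) ≠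
    v + 2 * ((R v ^ 2 + 2 * v * R v - v) * (4 * v * (v + 1)) / riccatiM (R v) v) := by
  intro h
  obtain ⟨c, hc, hc0⟩ := exists_hasDerivAt_eq_zero huv
    (fun x hx => (hR.hasDerivAt_V (h1.trans_le hx.1)
      (hx.2.trans_lt h2)).continuousAt.continuousWithinAt) h
    (fun x hx => hR.hasDerivAt_V (h1.trans hx.1) (hx.2.trans h2))
  have c1 := h1.trans hc.1
  have c2 := hc.2.trans h2
  have hM := hR.M_neg c1 c2
  have hx := hR.add_pos c c1 c2
  have hσ : 0 < -(c ^ 2 + c) := by nlinarith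
  have : 0 < 4 * (-(c ^ 2 + c) * (3 * ((R c + c) ^ 2 + (c ^ 2 + c)) -
      2 * (4 * c + 2) * (R c + c)) ^ 2
      + 4 * (R c + c) ^ 4 + 4 * (c ^ 2 + c) ^ 2 * (R c + c) ^ 2) / riccatiM (R c) c ^ 2 := by
    have := sq_pos_of_neg hM
    positivity
  linarith

/-- `1, t, R, tR` form a Chebyshev system on `(-1, 0)`: a combination with four zeros is trivial. -/
lemma coeffs_eq_zero (hR : RiccatiRatio R) {p₀ p₁ q₀ q₁ s₁ s₂ s₃ s₄ : ℝ}
    (h0 : -1 < s₁) (h12 : s₁ < s₂) (h23 : s₂ < s₃) (h34 : s₃ < s₄) (h4 : s₄ < 0)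
    (e1 : p₀ + p₁ * s₁ + (q₀ + q₁ * s₁) * R s₁ = 0) (e2 : p₀ + p₁ * s₂ + (q₀ + q₁ * s₂) * R s₂ = 0)
    (e3 : p₀ + p₁ * s₃ + (q₀ + q₁ * s₃) * R s₃ = 0)
    (e4 : p₀ + p₁ * s₄ + (q₀ + q₁ * s₄) * R s₄ = 0) :
    p₀ = 0 ∧ p₁ = 0 ∧ q₀ = 0 ∧ q₁ = 0 := by
  set D : ℝ → ℝ := fun t => (R t ^ 2 + 2 * t * R t - t) / (4 * t * (t + 1)) with hD
  have d1 : ∀ t, -1 < t → t < 0 → HasDerivAt (fun t => p₀ + p₁ * t + (q₀ + q₁ * t) * R t)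
      (p₁ + q₁ * R t + (q₀ + q₁ * t) * D t) t := by
    intro t h1 h2
    have hi := hasDerivAt_id t
    refine (((hi.const_mul p₁).const_add p₀).add
      (((hi.const_mul q₁).const_add q₀).mul (hR.deriv t h1 h2))).congr_deriv ?_
    simp [hD]
    ring
  have d2 : ∀ t, -1 < t → t < 0 → HasDerivAt (fun t => p₁ + q₁ * R t + (q₀ + q₁ * t) * D t)
      (2 * q₁ * D t + (q₀ + q₁ * t) * (riccatiM (R t) t / (4 * t * (t + 1)) ^ 2)) t := by
    intro t h1 h2
    have hi := hasDerivAt_id t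
    refine ((((hR.deriv t h1 h2).const_mul q₁).const_add p₁).add
      (((hi.const_mul q₁).const_add q₀).mul (hR.hasDerivAt_deriv h1 h2))).congr_deriv ?_
    simp [hD]
    ring
  have rolle : ∀ {f f' : ℝ → ℝ} (_ : ∀ t, -1 < t → t < 0 → HasDerivAt f (f' t) t) {a b : ℝ},
      -1 < a → a < b → b < 0 → f a = 0 → f b = 0 → ∃ c, a < c ∧ c < b ∧ f' c = 0 := by
    intro f f' hf a b ha hab hb fa fb
    obtain ⟨c, hc, h⟩ := exists_hasDerivAt_eq_zero hab
      (fun x hx => (hf x (ha.trans_le hx.1) (hx.2.trans_lt hb)).continuousAt.continuousWithinAt)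
      (fa.trans fb.symm) (fun x hx => hf x (ha.trans hx.1) (hx.2.trans hb))
    exact ⟨c, hc.1, hc.2, h⟩
  obtain ⟨a, a1, a2, ea⟩ := rolle d1 h0 h12 (by linarith) e1 e2
  obtain ⟨b, b1, b2, eb⟩ := rolle d1 (by linarith) h23 (by linarith) e2 e3
  obtain ⟨c, c1, c2, ec⟩ := rolle d1 (by linarith) h34 h4 e3 e4
  obtain ⟨u, u1, u2, eu⟩ := rolle d2 (by linarith) (by linarith : a < b) (by linarith) ea eb
  obtain ⟨v, v1, v2, ev⟩ := rolle d2 (by linarith) (by linarith : b < c) (by linarith) eb ec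
  -- A zero of the second derivative is a zero of `q₀ + q₁ V`.
  have key : ∀ t, -1 < t → t < 0 →
      2 * q₁ * D t + (q₀ + q₁ * t) * (riccatiM (R t) t / (4 * t * (t + 1)) ^ 2) = 0 →
      q₀ + q₁ * (t + 2 * ((R t ^ 2 + 2 * t * R t - t) * (4 * t * (t + 1)) /
        riccatiM (R t) t)) = 0 := by
    intro t h1 h2 h
    have h3 : t + 1 ≠ 0 := by linarith
    have h4 := h2.ne
    have hM := (hR.M_neg h1 h2).ne
    simp only [hD] at h
    field_simp at h ⊢
    linear_combination h
  have ku := key u (by linarith) (by linarith) eu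
  have kv := key v (by linarith) (by linarith) ev
  have hV := hR.V_ne (u := u) (v := v) (by linarith) (by linarith) (by linarith)
  have hq1 : q₁ = 0 := by
    by_contra hq
    exact hV (mul_left_cancel₀ hq (by linarith))
  have hq0 : q₀ = 0 := by simpa [hq1] using ku
  have hp1 : p₁ = 0 := by simpa [hq1, hq0] using ea
  have hp0 : p₀ = 0 := by simpa [hq1, hq0, hp1] using e1
  exact ⟨hp0, hp1, hq0, hq1⟩

end RiccatiRatio

lemma riccatiRatio_ell : RiccatiRatio fun t => ellB t / ellA t where
  deriv t h1 h2 := by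
    have hA := ellA_pos h2
    have h3 : t + 1 ≠ 0 := by linarith
    have h3' : 1 + t ≠ 0 := by linarith
    have h4 := h2.ne
    refine ((hasDerivAt_ellB h1 h2).div (hasDerivAt_ellA h1 h2) hA.ne').congr_deriv ?_
    rw [add_comm t 1]
    field_simp
    ring
  pos t _ h2 := div_pos (ellB_pos h2) (ellA_pos h2)
  le_one t _ h2 := (div_le_one (ellA_pos h2)).2 (ellB_le_ellA h2)
  add_pos t h1 h2 := by
    have hA := ellA_pos h2
    have := div_pos (ellA_add_ellB_pos h1 h2) hA
    have e : ellB t / ellA t + t = (t * ellA t + ellB t) / ellA t := by field_simp; ring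
    rwa [e]

/-! ### Counting the zeros -/

/-- The combination of the theorem at `h = t / 4`, up to a constant factor. -/
noncomputable def ellComb (α₀ α₁ γ₀ γ₁ t : ℝ) : ℝ :=
  5 * (α₀ + α₁ * (t / 4)) * (t * ellA t + ellB t) +
    (γ₀ + γ₁ * (t / 4)) * (t * ellA t + (3 * t + 4) * ellB t)

lemma ellComb_eq_zero {α₀ α₁ γ₀ γ₁ h : ℝ} (h1 : -1 / 4 < h) (h2 : h < 0)
    (h0 : (α₀ + α₁ * h) * AbI 0 h + (γ₀ + γ₁ * h) * AbI 2 h = 0) :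
    ellComb α₀ α₁ γ₀ γ₁ (4 * h) = 0 := by
  rw [AbI_zero_eq h1 h2, AbI_two_eq h1 h2] at h0
  have hs : √2 ≠ 0 := by positivity
  rw [ellComb, mul_div_cancel_left₀ h four_ne_zero]
  generalize ellA (4 * h) = A at h0 ⊢
  generalize ellB (4 * h) = B at h0 ⊢
  field_simp at h0
  linear_combination h0 / 6

lemma continuousAt_ellComb (α₀ α₁ γ₀ γ₁ : ℝ) {t : ℝ} (ht : t < 0) :
    ContinuousAt (ellComb α₀ α₁ γ₀ γ₁) t := by
  have hA : ContinuousAt ellA t := continuousAt_cosMoment_sqrt ht _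
  have hB : ContinuousAt ellB t := continuousAt_cosMoment_sqrt ht _
  unfold ellComb
  fun_prop

/-- The oval shrinks to the center as `h → -1/4`, so all integrals vanish there. -/
lemma ellComb_neg_one (α₀ α₁ γ₀ γ₁ : ℝ) : ellComb α₀ α₁ γ₀ γ₁ (-1) = 0 := by
  rw [ellComb, ell_neg_one.1, ell_neg_one.2]
  ring

/-- By the Picard–Fuchs system the derivative is `A (p + q B / A)` with affine `p`, `q`. -/
lemma hasDerivAt_ellComb (α₀ α₁ γ₀ γ₁ : ℝ) {t : ℝ} (h1 : -1 < t) (h2 : t < 0) :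
    HasDerivAt (ellComb α₀ α₁ γ₀ γ₁)
      (ellA t * (15 / 4 * α₀ + (35 / 16 * α₁ + γ₁ / 4) * t +
        (5 / 4 * α₁ + γ₁ + 15 / 4 * γ₀ + 27 / 16 * γ₁ * t) * (ellB t / ellA t))) t := by
  have hA := hasDerivAt_ellA h1 h2
  have hB := hasDerivAt_ellB h1 h2
  have hi := hasDerivAt_id t
  have h3 : 1 + t ≠ 0 := by linarith
  have h4 := h2.ne
  have hpos := ellA_pos h2
  refine HasDerivAt.congr_deriv
    ((((((hi.div_const 4).const_mul α₁).const_add α₀).const_mul 5).mul ((hi.mul hA).add hB)).add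
    ((((hi.div_const 4).const_mul γ₁).const_add γ₀).mul
      ((hi.mul hA).add (((hi.const_mul 3).add_const 4).mul hB)))) ?_
  simp
  field_simp
  ring

end AbelianOval

open AbelianOval

/-- For nontrivial coefficients, `(α₀+α₁h)I₀ + (γ₀+γ₁h)I₂` has at most 3 zeros
in `(−1/4, 0)`. -/
theorem zeros_I0_I2_combination (α₀ α₁ γ₀ γ₁ : ℝ)
    (hne : ¬(α₀ = 0 ∧ α₁ = 0 ∧ γ₀ = 0 ∧ γ₁ = 0)) :
    {h ∈ Set.Ioo (-(1:ℝ)/4) 0 |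
      (α₀ + α₁*h) * AbI 0 h + (γ₀ + γ₁*h) * AbI 2 h = 0}.encard ≤ 3 := by
  by_contra hcard
  have h4 : (4 : ℕ∞) ≤ {h ∈ Set.Ioo (-(1:ℝ)/4) 0 |
      (α₀ + α₁*h) * AbI 0 h + (γ₀ + γ₁*h) * AbI 2 h = 0}.encard := by
    have := Order.add_one_le_of_lt (not_le.1 hcard)
    exact this
  obtain ⟨S, hS, hS4⟩ := Set.exists_subset_encard_eq h4
  have hfin : S.Finite := Set.finite_of_encard_eq_coe (k := 4) hS4
  have hc4 : hfin.toFinset.card = 4 := by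
    rw [hfin.encard_eq_coe_toFinset_card] at hS4
    exact_mod_cast hS4
  let e := hfin.toFinset.orderEmbOfFin hc4
  have he (i : Fin 4) := hS (hfin.mem_toFinset.1 (hfin.toFinset.orderEmbOfFin_mem hc4 i))
  have hz (i : Fin 4) : ellComb α₀ α₁ γ₀ γ₁ (4 * e i) = 0 :=
    ellComb_eq_zero (by linarith [(he i).1.1]) (he i).1.2 (he i).2
  have hb (i : Fin 4) : -1 < 4 * e i ∧ 4 * e i < 0 := by
    have h1 : -(1:ℝ) / 4 < e i := (he i).1.1
    have h2 : e i < 0 := (he i).1.2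
    constructor <;> linarith
  have lt (i j : Fin 4) (hij : i < j) : 4 * e i < 4 * e j := by
    have : e i < e j := e.strictMono hij
    linarith
  have rolle : ∀ {a b : ℝ}, -1 ≤ a → a < b → b < 0 → ellComb α₀ α₁ γ₀ γ₁ a = 0 →
      ellComb α₀ α₁ γ₀ γ₁ b = 0 → ∃ c, a < c ∧ c < b ∧
        15 / 4 * α₀ + (35 / 16 * α₁ + γ₁ / 4) * c +
        (5 / 4 * α₁ + γ₁ + 15 / 4 * γ₀ + 27 / 16 * γ₁ * c) * (ellB c / ellA c) = 0 := by
    intro a b ha hab hb fa fb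
    obtain ⟨c, hc, h⟩ := exists_hasDerivAt_eq_zero hab
      (fun x hx => (continuousAt_ellComb α₀ α₁ γ₀ γ₁ (hx.2.trans_lt hb)).continuousWithinAt)
      (fa.trans fb.symm)
      (fun x hx => hasDerivAt_ellComb α₀ α₁ γ₀ γ₁ (ha.trans_lt hx.1) (hx.2.trans hb))
    exact ⟨c, hc.1, hc.2, (mul_eq_zero.1 h).resolve_left (ellA_pos (hc.2.trans hb)).ne'⟩
  -- The zero at the center `t = -1` supplies the fourth zero of the derivative.
  obtain ⟨a, a1, a2, ea⟩ := rolle le_rfl (hb 0).1 (hb 0).2 (ellComb_neg_one ..) (hz 0)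
  obtain ⟨b, b1, b2, eb⟩ := rolle (hb 0).1.le (lt 0 1 (by decide)) (hb 1).2 (hz 0) (hz 1)
  obtain ⟨c, c1, c2, ec⟩ := rolle (hb 1).1.le (lt 1 2 (by decide)) (hb 2).2 (hz 1) (hz 2)
  obtain ⟨d, d1, d2, ed⟩ := rolle (hb 2).1.le (lt 2 3 (by decide)) (hb 3).2 (hz 2) (hz 3)
  obtain ⟨hp0, hp1, hq0, hq1⟩ := riccatiRatio_ell.coeffs_eq_zero a1 (a2.trans b1) (b2.trans c1)
    (c2.trans d1) (d2.trans (hb 3).2) ea eb ec ed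
  exact hne ⟨by linarith, by linarith, by linarith, by linarith⟩
end
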